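/- arXiv:1403.4749 — 3 statements merged into one kernel-verified Lean document; each statement's English description precedes it below -/
import Mathlib

section
/- Let A' be the automaton of the composition construction (see context). Then every reset word of A' has length at least z(t)+1. -/
/-!
The state `D` is absorbing, so a reset word must send every state to `D`. A guard state can only
enter `D` from height `z` by a letter `ω_r`, and no letter raises the height of a guard state by more
than one (`α_i` puts it at height `1`, which is at most `h + 1`). Hence a word that kills the guard
state of height `h` has length at least `z + 1 - h` (`guard_height_add_length`), and starting
at height `0` gives the bound.
-/

/-- `z(t) = (t³ − t)/6`. -/
def zval (t : ℕ) : ℕ := (t ^ 3 - t) / 6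

/-- The transition function of the automaton `A_i` on states `Fin t`, where the
letters of `A_i` are `Option (L i)`: `none` is the shared letter `κ`, acting as the
identity, and `some a` acts via `δA i`. -/
def stepA {m t : ℕ} {L : Fin m → Type} (δA : ∀ i, Fin t → L i → Fin t)
    (i : Fin m) (s : Fin t) : Option (L i) → Fin t
  | none => s
  | some a => δA i s a

/-- The alphabet `I'` of the composed automaton `A'`: the shared letter `κ`,
the non-`κ` letters of each `A_i` (pairwise disjoint), the letters `α_1,…,α_m`
and the letters `ω_1,…,ω_t`. -/
inductive CLetter (m t : ℕ) (L : Fin m → Type) : Type where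
  | kappa : CLetter m t L
  | letter (i : Fin m) (a : L i) : CLetter m t L
  | alpha (i : Fin m) : CLetter m t L
  | omega (s : Fin t) : CLetter m t L

/-- Embedding of the alphabet `I_i` of `A_i` into `I'`. -/
def embedL {m t : ℕ} {L : Fin m → Type} (i : Fin m) : Option (L i) → CLetter m t L
  | none => CLetter.kappa
  | some a => CLetter.letter i a

/-- The state set `Q'` of `A'`: the original states `{1,…,t}`, the absorbing state `D`,
and the guard table `{0,…,z} × {0,…,q} × {T,F}` (with `T = true`, `F = false`). -/
inductive CState (t z q : ℕ) : Type where
  | orig (s : Fin t)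
  | dead
  | guard (h : Fin (z + 1)) (k : Fin (q + 1)) (b : Bool)

/-- The transition function `δ'` of the composed automaton `A'`.
Here `𝔟(i) ⊆ {0,…,q}` is the set of 1-bit positions of the number `i+1 ∈ {1,…,m}`
(membership of `k` is `Nat.testBit (i+1) k = true`). -/
def compStep {m t : ℕ} {L : Fin m → Type} (z q : ℕ)
    (δA : ∀ i, Fin t → L i → Fin t) (d : Fin m → ℕ) (hd : ∀ i, d i + 1 ≤ z)
    (πT πF : Fin m → Fin (q + 1) → Fin (q + 1)) :
    CState t z q → CLetter m t L → CState t z q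
  | CState.orig s, CLetter.kappa => CState.orig s
  | CState.orig s, CLetter.letter i a => CState.orig (δA i s a)
  | CState.orig s, CLetter.alpha _ => CState.orig s
  | CState.orig s, CLetter.omega r => if s = r then CState.dead else CState.orig s
  | CState.dead, _ => CState.dead
  | CState.guard _ k b, CLetter.alpha i =>
      CState.guard 1 (if b then πT i k else πF i k) b
  | CState.guard h k b, CLetter.letter i _ =>
      if hc : 1 ≤ h.val ∧ h.val ≤ d i ∧ Nat.testBit (i.val + 1) k.val = b then
        CState.guard ⟨h.val + 1, by have := hd i; omega⟩ k b
      else CState.guard 0 k b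
  | CState.guard h k b, CLetter.kappa =>
      if hc : 1 ≤ h.val ∧ h.val < z then
        CState.guard ⟨h.val + 1, by omega⟩ k b
      else CState.guard 0 k b
  | CState.guard h k b, CLetter.omega _ =>
      if h.val = z then CState.dead else CState.guard 0 k b

/-- `w` is a reset word for the automaton with transition function `step`:
the image of the whole state set under `w` is a singleton. -/
def IsResetWord {Q A : Type*} (step : Q → A → Q) (w : List A) : Prop :=
  ∃ q0 : Q, ∀ q : Q, w.foldl step q = q0

lemma foldl_compStep_dead {m t : ℕ} {L : Fin m → Type} (z q : ℕ)
    (δA : ∀ i, Fin t → L i → Fin t) (d : Fin m → ℕ) (hd : ∀ i, d i + 1 ≤ z)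
    (πT πF : Fin m → Fin (q + 1) → Fin (q + 1)) (w : List (CLetter m t L)) :
    w.foldl (compStep z q δA d hd πT πF) CState.dead = CState.dead := by
  induction w with
  | nil => rfl
  | cons x w ih => simpa [compStep] using ih

lemma guard_height_add_length {m t : ℕ} {L : Fin m → Type} (z q : ℕ)
    (δA : ∀ i, Fin t → L i → Fin t) (d : Fin m → ℕ) (hd : ∀ i, d i + 1 ≤ z)
    (πT πF : Fin m → Fin (q + 1) → Fin (q + 1)) (w : List (CLetter m t L)) :
    ∀ (h : Fin (z + 1)) (k : Fin (q + 1)) (b : Bool),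
      w.foldl (compStep z q δA d hd πT πF) (CState.guard h k b) = CState.dead →
        z + 1 ≤ h.val + w.length := by
  induction w with
  | nil => intro h k b hw; simp at hw
  | cons x w ih =>
    intro h k b hw
    rw [List.foldl_cons] at hw
    rw [List.length_cons]
    cases x with
    | kappa =>
      simp only [compStep] at hw
      split_ifs at hw
      · have := ih _ _ _ hw
        simp only at this
        omega
      · have := ih _ _ _ hw
        simp only [Fin.val_zero] at this
        omega
    | letter i a =>
      simp only [compStep] at hw
      split_ifs at hw
      · have := ih _ _ _ hw
        simp only at this
        omega
      · have := ih _ _ _ hw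
        simp only [Fin.val_zero] at this
        omega
    | alpha i =>
      simp only [compStep] at hw
      have := ih _ _ _ hw
      -- In `Fin (z + 1)` the numeral `1` has value `1 % (z + 1)`, which is at most `1`.
      have h1 : ((1 : Fin (z + 1)) : ℕ) ≤ 1 := by
        rw [Fin.val_one']
        exact Nat.mod_le _ _
      omega
    | omega r =>
      simp only [compStep] at hw
      split_ifs at hw
      · omega
      · have := ih _ _ _ hw
        simp only [Fin.val_zero] at this
        omega

/-- **property C1.** Every reset word of the composed automaton `A'`
has length at least `z(t) + 1`. -/
theorem every_reset_word_of_composition_has_length_at_least_z_add_one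
    {t m : ℕ} (ht : 1 ≤ t) (hm : 1 ≤ m)
    {L : Fin m → Type} [∀ i, Fintype (L i)]
    (δA : ∀ i, Fin t → L i → Fin t)
    (d : Fin m → ℕ) (hd : ∀ i, d i + 1 ≤ zval t)
    (πT πF : Fin m → Fin (Nat.log 2 (m + 1) + 1) → Fin (Nat.log 2 (m + 1) + 1))
    (hπT : ∀ i k, (∃ j, πT i j = k) ↔ Nat.testBit (i.val + 1) k.val = true)
    (hπF : ∀ i k, (∃ j, πF i j = k) ↔ Nat.testBit (i.val + 1) k.val = false)
    (w : List (CLetter m t L))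
    (hw : IsResetWord (compStep (zval t) (Nat.log 2 (m + 1)) δA d hd πT πF) w) :
    zval t + 1 ≤ w.length := by
  obtain ⟨q0, hq⟩ := hw
  have hdead := hq CState.dead
  rw [foldl_compStep_dead] at hdead
  have h0 := hq (CState.guard 0 0 true)
  rw [← hdead] at h0
  simpa using guard_height_add_length _ _ δA d hd πT πF w 0 0 true h0
end

section
/- Let A' be the automaton of the composition construction (see context). Then every word of the form α_i y₁⋯y_{d_i} κ^{z(t)−1−d_i} ω_s, where i∈{1,…,m}, y₁,…,y_{d_i}∈I_i, s∈{1,…,t}, and δ_i({1,…,t}, y₁⋯y_{d_i})={s}, is a reset word of A' (of length z(t)+1). -/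
section Runs

variable {m t : ℕ} {L : Fin m → Type} {z q : ℕ}
  (δA : ∀ i, Fin t → L i → Fin t) (d : Fin m → ℕ) (hd : ∀ i, d i + 1 ≤ z)
  (πT πF : Fin m → Fin (q + 1) → Fin (q + 1))

theorem foldl_dead (w : List (CLetter m t L)) :
    w.foldl (compStep z q δA d hd πT πF) CState.dead = CState.dead := by
  induction w with
  | nil => rfl
  | cons x w ih => simpa [compStep] using ih

theorem foldl_orig (i : Fin m) (ys : List (Option (L i))) (p : Fin t) :
    (ys.map (embedL i)).foldl (compStep z q δA d hd πT πF) (CState.orig p)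
      = CState.orig (ys.foldl (stepA δA i) p) := by
  induction ys generalizing p with
  | nil => rfl
  | cons y ys ih => cases y <;> simpa [embedL, compStep, stepA] using ih _

theorem foldl_kappa_orig (n : ℕ) (p : Fin t) :
    (List.replicate n CLetter.kappa).foldl (compStep z q δA d hd πT πF) (CState.orig p)
      = CState.orig p := by
  induction n with
  | zero => rfl
  | succ n ih => simpa [List.replicate_succ, compStep] using ih

/-- In a column compatible with `i`, every letter of `I_i` raises the height by one, as long as
the resulting height does not exceed `d_i + 1`. -/
theorem foldl_guard (i : Fin m) (ys : List (Option (L i))) (h : ℕ) (hz : h + ys.length < z + 1)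
    (h1 : 1 ≤ h) (hle : h + ys.length ≤ d i + 1) (k : Fin (q + 1)) (b : Bool)
    (hk : Nat.testBit (i.val + 1) k.val = b) :
    (ys.map (embedL i)).foldl (compStep z q δA d hd πT πF) (CState.guard ⟨h, by omega⟩ k b)
      = CState.guard ⟨h + ys.length, hz⟩ k b := by
  induction ys generalizing h with
  | nil => rfl
  | cons y ys ih =>
    simp only [List.length_cons] at hz hle
    have hi := hd i
    have hstep : compStep z q δA d hd πT πF (CState.guard ⟨h, by omega⟩ k b) (embedL i y)
        = CState.guard ⟨h + 1, by omega⟩ k b := by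
      cases y with
      | none => exact dif_pos ⟨h1, by show h < z; omega⟩
      | some a => exact dif_pos ⟨h1, by show h ≤ d i; omega, hk⟩
    rw [List.map_cons, List.foldl_cons, hstep, ih (h + 1) (by omega) (by omega) (by omega)]
    congr 2
    simp only [List.length_cons]
    omega

theorem foldl_kappa_guard (n h : ℕ) (hz : h + n < z + 1) (h1 : 1 ≤ h)
    (k : Fin (q + 1)) (b : Bool) :
    (List.replicate n CLetter.kappa).foldl (compStep z q δA d hd πT πF)
        (CState.guard ⟨h, by omega⟩ k b)
      = CState.guard ⟨h + n, hz⟩ k b := by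
  induction n generalizing h with
  | zero => rfl
  | succ n ih =>
    have hstep : compStep z q δA d hd πT πF (CState.guard ⟨h, by omega⟩ k b) CLetter.kappa
        = CState.guard ⟨h + 1, by omega⟩ k b :=
      dif_pos ⟨h1, by show h < z; omega⟩
    rw [List.replicate_succ, List.foldl_cons, hstep, ih (h + 1) (by omega) (by omega)]
    congr 2
    omega

end Runs

/-- **property C3.** Every word of the form
`α_i y₁⋯y_{d_i} κ^{z(t)−1−d_i} ω_s` with `i ∈ {1,…,m}`, `y₁,…,y_{d_i} ∈ I_i`,
`s ∈ {1,…,t}` and `δ_i({1,…,t}, y₁⋯y_{d_i}) = {s}` is a reset word of the composed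
automaton `A'`, of length `z(t) + 1`. -/
theorem special_form_word_is_reset_word_of_composition
    {t m : ℕ} (ht : 1 ≤ t) (hm : 1 ≤ m)
    {L : Fin m → Type} [∀ i, Fintype (L i)]
    (δA : ∀ i, Fin t → L i → Fin t)
    (d : Fin m → ℕ) (hd : ∀ i, d i + 1 ≤ zval t)
    (πT πF : Fin m → Fin (Nat.log 2 (m + 1) + 1) → Fin (Nat.log 2 (m + 1) + 1))
    (hπT : ∀ i k, (∃ j, πT i j = k) ↔ Nat.testBit (i.val + 1) k.val = true)
    (hπF : ∀ i k, (∃ j, πF i j = k) ↔ Nat.testBit (i.val + 1) k.val = false)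
    (i : Fin m) (ys : List (Option (L i))) (s : Fin t)
    (hys : ys.length = d i)
    (hsync : ∀ p : Fin t, ys.foldl (stepA δA i) p = s) :
    (CLetter.alpha i ::
        (ys.map (embedL i) ++
          (List.replicate (zval t - 1 - d i) CLetter.kappa ++ [CLetter.omega s]))).length
      = zval t + 1 ∧
    IsResetWord (compStep (zval t) (Nat.log 2 (m + 1)) δA d hd πT πF)
      (CLetter.alpha i ::
        (ys.map (embedL i) ++
          (List.replicate (zval t - 1 - d i) CLetter.kappa ++ [CLetter.omega s]))) := by
  have hi := hd i
  refine ⟨by simp [hys]; omega, CState.dead, fun x => ?_⟩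
  cases x with
  | dead => exact foldl_dead δA d hd πT πF _
  | orig p =>
    rw [List.foldl_cons, List.foldl_append, List.foldl_append]
    simp only [compStep]
    rw [foldl_orig, hsync, foldl_kappa_orig]
    simp [compStep]
  | guard h k b =>
    -- `α_i` moves the guard to height `1`, in a column compatible with `i`.
    obtain ⟨k', hk', hstep⟩ : ∃ k', Nat.testBit (i.val + 1) k'.val = b ∧
        compStep (zval t) (Nat.log 2 (m + 1)) δA d hd πT πF (CState.guard h k b)
          (CLetter.alpha i) = CState.guard ⟨1, by omega⟩ k' b := by
      -- The literal `1 : Fin (z + 1)` has value `1` because `z ≥ d_i + 1 ≥ 1`.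
      have h1 : (1 : Fin (zval t + 1)) = ⟨1, by omega⟩ :=
        Fin.ext (Nat.mod_eq_of_lt (show 1 < zval t + 1 by omega))
      cases b with
      | true => exact ⟨πT i k, (hπT i _).1 ⟨k, rfl⟩, by simp [compStep, h1]⟩
      | false => exact ⟨πF i k, (hπF i _).1 ⟨k, rfl⟩, by simp [compStep, h1]⟩
    rw [List.foldl_cons, List.foldl_append, List.foldl_append, hstep,
      foldl_guard δA d hd πT πF i ys 1 (by omega) le_rfl (by omega) k' b hk',
      foldl_kappa_guard δA d hd πT πF _ _ (by omega) (by omega)]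
    exact if_pos (by show 1 + ys.length + (zval t - 1 - d i) = zval t; omega)
end

section
/- Let A' be the automaton of the composition construction (see context). Then A' has a reset word of length at most z(t)+1 if and only if there exists i∈{1,…,m} such that A_i has a reset word of length at most d_i. -/
section Composition

variable {m t : ℕ} {L : Fin m → Type} {z q : ℕ} (δA : ∀ i, Fin t → L i → Fin t)
  (d : Fin m → ℕ) (hd : ∀ i, d i + 1 ≤ z) (πT πF : Fin m → Fin (q + 1) → Fin (q + 1))

/-- One letter raises the height of a guard state by at most one, and `D` is only entered from
height `z`. -/
theorem height_bound (w : List (CLetter m t L)) (h : Fin (z + 1)) (k : Fin (q + 1)) (b : Bool)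
    (hw : w.foldl (compStep z q δA d hd πT πF) (CState.guard h k b) = CState.dead) :
    z + 1 ≤ w.length + h.val := by
  induction w generalizing h k with
  | nil => simp at hw
  | cons x w ih =>
    rw [List.foldl_cons] at hw
    rw [List.length_cons]
    cases x with
    | kappa =>
      simp only [compStep] at hw
      split_ifs at hw with hc
      · have := ih _ _ hw
        simp only at this
        omega
      · have := ih _ _ hw
        simp only [Fin.val_zero] at this
        omega
    | letter i a =>
      simp only [compStep] at hw
      split_ifs at hw with hc
      · have := ih _ _ hw
        simp only at this
        omega
      · have := ih _ _ hw
        simp only [Fin.val_zero] at this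
        omega
    | alpha i =>
      simp only [compStep] at hw
      have := ih _ _ hw
      have h1 : (1 : Fin (z + 1)).val ≤ 1 := by
        rw [Fin.val_one']
        exact Nat.mod_le _ _
      omega
    | omega r =>
      simp only [compStep] at hw
      split_ifs at hw with hc
      · omega
      · have := ih _ _ hw
        simp only [Fin.val_zero] at this
        omega

theorem eq_of_testBit_eq_of_le (hq : m < 2 ^ (q + 1)) (i j : Fin m)
    (hij : ∀ k : Fin (q + 1), Nat.testBit (j.val + 1) k.val = Nat.testBit (i.val + 1) k.val) :
    j = i := by
  have : j.val + 1 = i.val + 1 := by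
    apply Nat.eq_of_testBit_eq
    intro k
    by_cases hk : k < q + 1
    · exact hij ⟨k, hk⟩
    · have hp : 2 ^ (q + 1) ≤ 2 ^ k := Nat.pow_le_pow_right (by norm_num) (by omega)
      rw [Nat.testBit_lt_two_pow (by omega), Nat.testBit_lt_two_pow (by omega)]
  exact Fin.ext (by omega)

/-- A word `w` with no slack (`|w| + h = z + 1`) that sends to `D` all guard states of height `h`
whose column agrees with `𝔟(i)` acts on the original states as a word `ys` over `I_i` followed by a
single `ω_r`. The letters `κ` are dropped from `ys`, which gives the length bound. -/
theorem extract_component_word (hq : m < 2 ^ (q + 1)) (i : Fin m) (w : List (CLetter m t L))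
    (h : Fin (z + 1)) (h1 : 1 ≤ h.val) (hlen : w.length + h.val = z + 1)
    (hw : ∀ (k : Fin (q + 1)) (b : Bool), Nat.testBit (i.val + 1) k.val = b →
      w.foldl (compStep z q δA d hd πT πF) (CState.guard h k b) = CState.dead) :
    ∃ ys : List (Option (L i)), ys.length ≤ d i + 1 - h.val ∧ ∃ r : Fin t, ∀ s : Fin t,
      w.foldl (compStep z q δA d hd πT πF) (CState.orig s) = CState.dead →
        ys.foldl (stepA δA i) s = r := by
  induction w generalizing h with
  | nil =>
    have := h.isLt
    simp only [List.length_nil] at hlen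
    omega
  | cons x w ih =>
    simp only [List.foldl_cons] at hw ⊢
    rw [List.length_cons] at hlen
    cases x with
    | kappa =>
      by_cases hc : 1 ≤ h.val ∧ h.val < z
      · simp only [compStep, dif_pos hc] at hw ⊢
        obtain ⟨ys, hl, hr⟩ := ih ⟨h.val + 1, by omega⟩ (by simp) (by simp only; omega) hw
        exact ⟨ys, by simp only at hl; omega, hr⟩
      · simp only [compStep, dif_neg hc] at hw
        have := height_bound δA d hd πT πF w _ _ _ (hw 0 _ rfl)
        simp only [Fin.val_zero] at this
        omega
    | letter j a =>
      -- Otherwise the guard state in that column would fall to height `0`.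
      have key : ∀ k : Fin (q + 1), h.val ≤ d j ∧
          Nat.testBit (j.val + 1) k.val = Nat.testBit (i.val + 1) k.val := by
        intro k
        by_contra hc
        have hk := hw k _ rfl
        simp only [compStep] at hk
        rw [dif_neg (fun hc' => hc hc'.2)] at hk
        have := height_bound δA d hd πT πF w _ _ _ hk
        simp only [Fin.val_zero] at this
        omega
      obtain rfl : j = i := eq_of_testBit_eq_of_le hq i j fun k => (key k).2
      have hle := (key 0).1
      have hdj := hd j
      obtain ⟨ys, hl, r, hr⟩ := ih ⟨h.val + 1, by omega⟩ (by simp) (by simp only; omega) (by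
        intro k b hb
        have hk := hw k b hb
        simp only [compStep] at hk
        rwa [dif_pos ⟨h1, hle, hb⟩] at hk)
      refine ⟨some a :: ys, ?_, r, fun s hs => ?_⟩
      · simp only [List.length_cons] at hl ⊢
        omega
      · exact hr (δA j s a) hs
    | alpha j =>
      simp only [compStep] at hw
      have := height_bound δA d hd πT πF w _ _ _ (hw 0 _ rfl)
      have h2 : (1 : Fin (z + 1)).val ≤ 1 := by
        rw [Fin.val_one']
        exact Nat.mod_le _ _
      omega
    | omega r =>
      by_cases hc : h.val = z
      · obtain rfl : w = [] := List.length_eq_zero_iff.mp (by omega)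
        refine ⟨[], by simp, r, fun s hs => ?_⟩
        simp only [compStep, List.foldl_nil] at hs ⊢
        by_contra hne
        simp [hne] at hs
      · simp only [compStep, if_neg hc] at hw
        have := height_bound δA d hd πT πF w _ _ _ (hw 0 _ rfl)
        simp only [Fin.val_zero] at this
        omega

theorem foldl_orig_embed (i : Fin m) (ys : List (Option (L i))) (s : Fin t) :
    (ys.map (embedL i)).foldl (compStep z q δA d hd πT πF) (CState.orig s)
      = CState.orig (ys.foldl (stepA δA i) s) := by
  induction ys generalizing s with
  | nil => rfl
  | cons y ys ih => cases y <;> exact ih _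

theorem foldl_orig_kappa (n : ℕ) (s : Fin t) :
    (List.replicate n CLetter.kappa).foldl (compStep z q δA d hd πT πF) (CState.orig s)
      = CState.orig s := by
  induction n with
  | zero => rfl
  | succ n ih => exact ih

theorem foldl_guard_embed (i : Fin m) (ys : List (Option (L i))) (h h' : Fin (z + 1))
    (h1 : 1 ≤ h.val) (hlen : h.val + ys.length ≤ d i + 1) (hh : h'.val = h.val + ys.length)
    (k : Fin (q + 1)) (b : Bool) (hb : Nat.testBit (i.val + 1) k.val = b) :
    (ys.map (embedL i)).foldl (compStep z q δA d hd πT πF) (CState.guard h k b)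
      = CState.guard h' k b := by
  induction ys generalizing h with
  | nil =>
    obtain rfl : h' = h := Fin.ext (by simpa using hh)
    rfl
  | cons y ys ih =>
    have hdi := hd i
    rw [List.length_cons] at hlen hh
    rw [List.map_cons, List.foldl_cons]
    cases y with
    | none =>
      simp only [embedL, compStep]
      rw [dif_pos ⟨h1, by omega⟩]
      exact ih _ (by simp) (by simp only; omega) (by simp only; omega)
    | some a =>
      simp only [embedL, compStep]
      rw [dif_pos ⟨h1, by omega, hb⟩]
      exact ih _ (by simp) (by simp only; omega) (by simp only; omega)

theorem foldl_guard_kappa (n : ℕ) (h : Fin (z + 1)) (h1 : 1 ≤ h.val) (hn : h.val + n = z)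
    (k : Fin (q + 1)) (b : Bool) :
    (List.replicate n CLetter.kappa).foldl (compStep z q δA d hd πT πF) (CState.guard h k b)
      = CState.guard (Fin.last z) k b := by
  induction n generalizing h with
  | zero =>
    obtain rfl : h = Fin.last z := Fin.ext (by simpa using hn)
    rfl
  | succ n ih =>
    rw [List.replicate_succ, List.foldl_cons]
    simp only [compStep]
    rw [dif_pos ⟨h1, by omega⟩]
    exact ih _ (by simp) (by simp only; omega)

end Composition

/-- The composed automaton `A'` has a reset word of length at most
`z(t) + 1` if and only if some `A_i` has a reset word of length at most `d_i`. -/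
theorem composition_has_short_reset_word_iff_some_component_does
    {t m : ℕ} (ht : 1 ≤ t) (hm : 1 ≤ m)
    {L : Fin m → Type} [∀ i, Fintype (L i)]
    (δA : ∀ i, Fin t → L i → Fin t)
    (d : Fin m → ℕ) (hd : ∀ i, d i + 1 ≤ zval t)
    (πT πF : Fin m → Fin (Nat.log 2 (m + 1) + 1) → Fin (Nat.log 2 (m + 1) + 1))
    (hπT : ∀ i k, (∃ j, πT i j = k) ↔ Nat.testBit (i.val + 1) k.val = true)
    (hπF : ∀ i k, (∃ j, πF i j = k) ↔ Nat.testBit (i.val + 1) k.val = false) :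
    (∃ w : List (CLetter m t L), w.length ≤ zval t + 1 ∧
        IsResetWord (compStep (zval t) (Nat.log 2 (m + 1)) δA d hd πT πF) w)
    ↔ (∃ (i : Fin m) (ys : List (Option (L i))),
        ys.length ≤ d i ∧ IsResetWord (stepA δA i) ys) := by
  have hz : 1 ≤ zval t := by
    have := hd ⟨0, hm⟩
    omega
  have hq : m < 2 ^ (Nat.log 2 (m + 1) + 1) := by
    have := Nat.lt_pow_succ_log_self (b := 2) (by norm_num) (m + 1)
    omega
  have hone : (1 : Fin (zval t + 1)).val = 1 := by
    rw [Fin.val_one']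
    exact Nat.mod_eq_of_lt (by omega)
  constructor
  · rintro ⟨w, hlen, q0, hq0⟩
    have hdead := (hq0 CState.dead).symm.trans (foldl_dead δA d hd πT πF w)
    subst hdead
    have hlen' := height_bound δA d hd πT πF w 0 0 true (hq0 _)
    simp only [Fin.val_zero] at hlen'
    cases w with
    | nil => simp at hlen'
    | cons x w =>
      rw [List.length_cons] at hlen hlen'
      have hx : ∃ i, x = CLetter.alpha i := by
        by_contra hne
        have h0 := hq0 (CState.guard 0 0 true)
        rw [List.foldl_cons] at h0
        cases x with
        | alpha i => exact hne ⟨i, rfl⟩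
        | kappa =>
          simp [compStep] at h0
          have := height_bound δA d hd πT πF w _ _ _ h0
          simp only [Fin.val_zero] at this
          omega
        | letter i a =>
          simp [compStep] at h0
          have := height_bound δA d hd πT πF w _ _ _ h0
          simp only [Fin.val_zero] at this
          omega
        | omega r =>
          simp only [compStep] at h0
          rw [if_neg (by rw [Fin.val_zero]; omega)] at h0
          have := height_bound δA d hd πT πF w _ _ _ h0
          simp only [Fin.val_zero] at this
          omega
      obtain ⟨i, rfl⟩ := hx
      obtain ⟨ys, hl, r, hr⟩ := extract_component_word δA d hd πT πF hq i w 1 (by omega)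
        (by omega) (by
          intro k b hb
          cases b with
          | true =>
            obtain ⟨j, rfl⟩ := (hπT i k).2 hb
            exact hq0 (CState.guard 0 j true)
          | false =>
            obtain ⟨j, rfl⟩ := (hπF i k).2 hb
            exact hq0 (CState.guard 0 j false))
      exact ⟨i, ys, by omega, r, fun s => hr s (hq0 (CState.orig s))⟩
  · rintro ⟨i, ys, hlen, r, hr⟩
    have hdi := hd i
    refine ⟨CLetter.alpha i :: (ys.map (embedL i) ++
      (List.replicate (zval t - 1 - ys.length) CLetter.kappa ++ [CLetter.omega r])), ?_,
      CState.dead, ?_⟩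
    · simp only [List.length_cons, List.length_append, List.length_map, List.length_replicate,
        List.length_nil]
      omega
    · intro s
      cases s with
      | dead => exact foldl_dead δA d hd πT πF _
      | orig s =>
        rw [List.foldl_cons, List.foldl_append, List.foldl_append]
        simp only [compStep]
        rw [foldl_orig_embed, foldl_orig_kappa, hr]
        simp [compStep]
      | guard h k b =>
        rw [List.foldl_cons, List.foldl_append, List.foldl_append]
        simp only [compStep]
        rw [foldl_guard_embed δA d hd πT πF i ys 1 ⟨1 + ys.length, by omega⟩ (by omega)
          (by omega) (by simp only; omega), foldl_guard_kappa]
        · simp [compStep]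
        · simp
        · simp only
          omega
        · cases b with
          | true => exact (hπT i _).1 ⟨k, rfl⟩
          | false => exact (hπF i _).1 ⟨k, rfl⟩
end
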